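/- Let (X, Σ, μ) be a subprobability space, let P = {P_i}_{i=1}^{∞} be a partition of X with h(μ; P) < ∞, and let (R_i)_{i=1}^{∞} be a sequence of pairwise disjoint measurable sets such that {R_i}_{i=1}^{∞} is a partition of X. Then lim_{n→∞} Σ_{i=1}^{∞} sh(μ(P_i ∖ (R_1 ∪ … ∪ R_n))) = 0, and consequently for every k ∈ ℕ: Σ_{i=1}^{k} sh(μ(R_i)) + Σ_{i=1}^{∞} sh(μ(P_i ∖ (R_1 ∪ … ∪ R_k))) ≥ Σ_{i=1}^{∞} sh(μ(R_i)) whenever the left-hand side is, for every n ≥ k, at least Σ_{i=1}^{n} sh(μ(R_i)) + Σ_{i=1}^{∞} sh(μ(P_i ∖ (R_1 ∪ … ∪ R_n))). -/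

import Mathlib

open MeasureTheory ENNReal Filter

/-- The Shannon function `sh x = -x * log₂ x` (with `sh 0 = 0`, since `log 0 = 0`). -/
noncomputable def sh (x : ℝ) : ℝ := -x * Real.logb 2 x

/-- A (countable, ℕ-indexed) partition of `X` w.r.t. the measure `μ`:
measurable, pairwise disjoint sets whose union has null complement. -/
def IsPartition {X : Type*} [MeasurableSpace X] (μ : Measure X) (P : ℕ → Set X) : Prop :=
  (∀ i, MeasurableSet (P i)) ∧ Pairwise (Function.onFun Disjoint P) ∧
    μ (Set.univ \ ⋃ i, P i) = 0

/-- The entropy `h(μ; P) = Σ_i sh(μ(P_i)) ∈ [0,∞]` of a countable family of sets. -/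
noncomputable def partEntropy {X : Type*} [MeasurableSpace X]
    (μ : Measure X) (P : ℕ → Set X) : ℝ≥0∞ :=
  ∑' i, ENNReal.ofReal (sh ((μ (P i)).toReal))

/-- An error-control family: a family of measurable sets covering `X`. -/
def IsErrorControl {X : Type*} [MeasurableSpace X] (𝒬 : Set (Set X)) : Prop :=
  (∀ Q ∈ 𝒬, MeasurableSet Q) ∧ ⋃₀ 𝒬 = Set.univ

/-- `P` is `𝒬`-acceptable: every element of `P` is contained in some member of `𝒬`. -/
def Acceptable {X : Type*} (𝒬 : Set (Set X)) (P : ℕ → Set X) : Prop :=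
  ∀ i, ∃ Q ∈ 𝒬, P i ⊆ Q

/-- The entropy `H(μ; 𝒬)`: the infimum of entropies of `𝒬`-acceptable partitions
(`= ∞` if there is none). -/
noncomputable def coverEntropy {X : Type*} [MeasurableSpace X]
    (μ : Measure X) (𝒬 : Set (Set X)) : ℝ≥0∞ :=
  ⨅ (P : ℕ → Set X) (_ : IsPartition μ P) (_ : Acceptable 𝒬 P), partEntropy μ P

lemma sh_nonneg_aux {x : ℝ} (h0 : 0 ≤ x) (h1 : x ≤ 1) : 0 ≤ sh x := by
  unfold sh
  have := Real.logb_nonpos (b := 2) (by norm_num) h0 h1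
  nlinarith

lemma sh_le_aux {x y : ℝ} (hy : 0 ≤ y) (hyx : y ≤ x) (hx : x ≤ 1) :
    sh y ≤ sh x + x * (Real.log 2)⁻¹ := by
  have hl2 : 0 < Real.log 2 := Real.log_pos (by norm_num)
  have key : -y * Real.log y ≤ -x * Real.log x + x := by
    rcases hy.eq_or_lt with h | h
    · subst h
      have := Real.log_nonpos hyx hx
      nlinarith
    · have hx0 : 0 < x := h.trans_le hyx
      have h1 := Real.log_le_sub_one_of_pos (div_pos hx0 h)
      rw [Real.log_div hx0.ne' h.ne'] at h1
      have h2 := mul_le_mul_of_nonneg_left h1 hy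
      have h3 : y * (x / y - 1) = x - y := by field_simp
      have h4 := Real.log_nonpos hx0.le hx
      nlinarith
  have := mul_le_mul_of_nonneg_right key (inv_nonneg.2 hl2.le)
  simp only [sh, Real.logb, div_eq_mul_inv]
  linarith

lemma continuous_sh_aux : Continuous sh := by
  have : sh = fun x => Real.negMulLog x / Real.log 2 := by
    funext x
    simp only [sh, Real.logb, Real.negMulLog]
    ring
  rw [this]
  exact Real.continuous_negMulLog.div_const _

lemma tendsto_part_aux {X : Type*} [MeasurableSpace X] (μ : Measure X) (hμ : μ Set.univ ≤ 1)
    (P : ℕ → Set X) (hP : IsPartition μ P) (hfin : partEntropy μ P ≠ ⊤)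
    (R : ℕ → Set X) (hR : IsPartition μ R) :
    Filter.Tendsto
        (fun n => ∑' i, ENNReal.ofReal
          (sh ((μ (P i \ ⋃ j ∈ Finset.range n, R j)).toReal)))
        Filter.atTop (nhds 0) := by
  have hle : ∀ s, μ s ≤ 1 := fun s => (measure_mono (Set.subset_univ s)).trans hμ
  have hne : ∀ s, μ s ≠ ⊤ := fun s => ((hle s).trans_lt ENNReal.one_lt_top).ne
  have hreal : ∀ s, (μ s).toReal ≤ 1 := fun s => by
    simpa using ENNReal.toReal_mono ENNReal.one_ne_top (hle s)
  have hl2 : 0 < Real.log 2 := Real.log_pos (by norm_num)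
  let g : ℕ → ℝ≥0∞ := fun i => ENNReal.ofReal (sh ((μ (P i)).toReal)) +
    μ (P i) * ENNReal.ofReal (Real.log 2)⁻¹
  have hg : ∑' i, g i ≠ ⊤ := by
    simp only [g]
    rw [ENNReal.tsum_add, ENNReal.tsum_mul_right, ← measure_iUnion hP.2.1 hP.1]
    exact ENNReal.add_ne_top.2 ⟨hfin, ENNReal.mul_ne_top (hne _) ENNReal.ofReal_ne_top⟩
  have hlim : ∀ i, Tendsto (fun n => ENNReal.ofReal
      (sh ((μ (P i \ ⋃ j ∈ Finset.range n, R j)).toReal))) atTop (nhds 0) := by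
    intro i
    have h1 : Tendsto (fun n => μ (P i \ ⋃ j ∈ Finset.range n, R j)) atTop (nhds 0) := by
      have hz : μ (⋂ n : ℕ, (P i \ ⋃ j ∈ Finset.range n, R j)) = 0 := by
        refine measure_mono_null ?_ hR.2.2
        intro x hx
        refine ⟨Set.mem_univ _, fun hx' => ?_⟩
        obtain ⟨j, hj⟩ := Set.mem_iUnion.1 hx'
        exact (Set.mem_iInter.1 hx (j + 1)).2
          (Set.mem_biUnion (Finset.mem_coe.2 (Finset.self_mem_range_succ j)) hj)
      rw [← hz]
      refine tendsto_measure_iInter_atTop (fun n => ?_) ?_ ⟨0, hne _⟩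
      · exact ((hP.1 i).diff (Finset.measurableSet_biUnion _ fun j _ => hR.1 j)).nullMeasurableSet
      · intro m n hmn
        refine Set.sdiff_subset_sdiff_right (Set.biUnion_subset_biUnion_left ?_)
        intro j hj
        exact Finset.mem_range.2 ((Finset.mem_range.1 hj).trans_le hmn)
    have h2 := (ENNReal.tendsto_toReal ENNReal.zero_ne_top).comp h1
    have h3 := (ENNReal.continuous_ofReal.comp continuous_sh_aux).continuousAt.tendsto.comp h2
    simpa [sh, Function.comp_def] using h3
  have := tendsto_lintegral_of_dominated_convergence (μ := Measure.count) (F := fun n i =>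
      ENNReal.ofReal (sh ((μ (P i \ ⋃ j ∈ Finset.range n, R j)).toReal))) (f := fun _ => 0) g
      (fun n => measurable_of_countable _) (fun n => Eventually.of_forall fun i => ?_)
      (by rwa [lintegral_count]) (Eventually.of_forall hlim)
  · simpa [lintegral_count] using this
  · have h := sh_le_aux (ENNReal.toReal_nonneg (a := μ (P i \ ⋃ j ∈ Finset.range n, R j)))
      (ENNReal.toReal_mono (hne (P i)) (measure_mono Set.sdiff_subset)) (hreal _)
    refine (ENNReal.ofReal_le_ofReal h).trans ?_
    rw [ENNReal.ofReal_add (sh_nonneg_aux ENNReal.toReal_nonneg (hreal _))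
      (mul_nonneg ENNReal.toReal_nonneg (inv_nonneg.2 hl2.le)),
      ENNReal.ofReal_mul ENNReal.toReal_nonneg, ENNReal.ofReal_toReal (hne _)]

/-- Steps of Theorem II.2: if `P` has finite entropy and `R` is a (pairwise disjoint)
partition of `X`, then `lim_n Σ_i sh(μ(P i ∖ (R 0 ∪ … ∪ R (n-1)))) = 0`; consequently,
for every `k`, `Σ_{i<k} sh(μ(R i)) + Σ_i sh(μ(P i ∖ (R 0 ∪ … ∪ R (k-1)))) ≥ Σ_i sh(μ(R i))`
whenever this left-hand side dominates, for every `n ≥ k`, the analogous expression at `n`. -/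
theorem stmt_11 {X : Type*} [MeasurableSpace X] (μ : Measure X) (hμ : μ Set.univ ≤ 1)
    (P : ℕ → Set X) (hP : IsPartition μ P) (hfin : partEntropy μ P ≠ ⊤)
    (R : ℕ → Set X) (hR : IsPartition μ R) :
    Filter.Tendsto
        (fun n => ∑' i, ENNReal.ofReal
          (sh ((μ (P i \ ⋃ j ∈ Finset.range n, R j)).toReal)))
        Filter.atTop (nhds 0) ∧
      ∀ k : ℕ,
        (∀ n, k ≤ n →
          ∑ i ∈ Finset.range n, ENNReal.ofReal (sh ((μ (R i)).toReal)) +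
              ∑' i, ENNReal.ofReal
                (sh ((μ (P i \ ⋃ j ∈ Finset.range n, R j)).toReal)) ≤
            ∑ i ∈ Finset.range k, ENNReal.ofReal (sh ((μ (R i)).toReal)) +
              ∑' i, ENNReal.ofReal
                (sh ((μ (P i \ ⋃ j ∈ Finset.range k, R j)).toReal))) →
        ∑' i, ENNReal.ofReal (sh ((μ (R i)).toReal)) ≤
          ∑ i ∈ Finset.range k, ENNReal.ofReal (sh ((μ (R i)).toReal)) +
            ∑' i, ENNReal.ofReal
              (sh ((μ (P i \ ⋃ j ∈ Finset.range k, R j)).toReal)) := by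
  refine ⟨tendsto_part_aux μ hμ P hP hfin R hR, fun k hk => ?_⟩
  refine le_of_tendsto (ENNReal.tendsto_nat_tsum _) ?_
  filter_upwards [eventually_ge_atTop k] with n hn
  exact le_self_add.trans (hk n hn)
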